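/- Let 0 < a < b and let k ≥ 1 be an integer. Then there exist a function u : [a,b] → ℝ, twice continuously differentiable, with u(a) = u(b) = 0 and −𝓕(r, u''(r), u'(r)/r) = |u(r)|^{p−1}u(r) for all r ∈ (a,b), and a finite sequence a = r₀ < r₁ < … < r_k = b such that (−1)^{j−1} u(r) > 0 for all r ∈ (r_{j−1}, r_j) and all j = 1,…,k; moreover there also exists such a solution with the opposite sign pattern, i.e. (−1)^{j} u(r) > 0 on (r_{j−1}, r_j) for j = 1,…,k. (These are radial solutions of −F(x,D²u) = |u|^{p−1}u in the annulus A_{a,b} with exactly k nodal regions.) -/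

import Mathlib

open Real Set

/-- Uniform ellipticity of the radial form `𝓕(r, m, l)` of a uniformly elliptic operator. -/
def UnifElliptic (n : ℕ) (lam Lam : ℝ) (F : ℝ → ℝ → ℝ → ℝ) : Prop :=
  ∀ r : ℝ, 0 < r → ∀ m l s t : ℝ, 0 ≤ s → 0 ≤ t →
    lam * (s + ((n : ℝ) - 1) * t) ≤ F r (m + s) (l + t) - F r m l ∧
      F r (m + s) (l + t) - F r m l ≤ Lam * (s + ((n : ℝ) - 1) * t)

/-- A function that starts below a barrier and grows strictly slower at every contact point
stays below the barrier. -/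
lemma le_barrier {y B B' : ℝ → ℝ} {s t : ℝ} (hB : ∀ x, HasDerivAt B (B' x) x) (hs : y s ≤ B s)
    (h : ∀ x ∈ Icc s t, ∃ y', HasDerivAt y y' x ∧ (y x = B x → y' < B' x)) :
    ∀ x ∈ Icc s t, y x ≤ B x := by
  have hd : ∀ x ∈ Icc s t, HasDerivAt y (deriv y x) x := fun x hx => by
    obtain ⟨y', hy, -⟩ := h x hx
    exact hy.differentiableAt.hasDerivAt
  refine fun x hx => image_le_of_deriv_right_lt_deriv_boundary (f' := deriv y)
    (fun z hz => (hd z hz).continuousAt.continuousWithinAt)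
    (fun z hz => (hd z (Ico_subset_Icc_self hz)).hasDerivWithinAt) hs hB (fun z hz hzB => ?_) hx
  obtain ⟨y', hy, hlt⟩ := h z (Ico_subset_Icc_self hz)
  rw [hy.deriv]
  exact hlt hzB

lemma sub_le_of_hasDerivAt_le {y y' : ℝ → ℝ} {s t K : ℝ} (hst : s ≤ t)
    (hy : ∀ x ∈ Icc s t, HasDerivAt y (y' x) x) (hK : ∀ x ∈ Icc s t, y' x ≤ K) :
    y t - y s ≤ K * (t - s) := by
  rcases hst.eq_or_lt with rfl | hlt
  · simp
  obtain ⟨ξ, hξ, he⟩ := exists_hasDerivAt_eq_slope y y' hlt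
    (fun x hx => (hy x hx).continuousAt.continuousWithinAt)
    (fun x hx => hy x (Ioo_subset_Icc_self hx))
  have h1 := hK ξ (Ioo_subset_Icc_self hξ)
  rwa [he, div_le_iff₀ (by linarith)] at h1

/-- `U ≥ 0` solves `U'' = -c U' - g f(U)` on `[s, t]`, with `V = U'` and variable coefficients
`c ∈ [0, C]` and `g ∈ [g₁, g₂]`. -/
def IsArc (C g₁ g₂ : ℝ) (f U V : ℝ → ℝ) (s t : ℝ) : Prop :=
  ∀ x ∈ Icc s t, 0 ≤ U x ∧ HasDerivAt U (V x) x ∧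
    ∃ c g, 0 ≤ c ∧ c ≤ C ∧ g₁ ≤ g ∧ g ≤ g₂ ∧ HasDerivAt V (-(c * V x) - g * f (U x)) x

/-- Nonnegative on `[0, ∞)` and dominated there by the power `x ^ p`. -/
def IsSubpower (p : ℝ) (f : ℝ → ℝ) : Prop := ∀ x, 0 ≤ x → 0 ≤ f x ∧ f x ≤ x ^ p

namespace IsArc

variable {C g₁ g₂ p : ℝ} {f U V : ℝ → ℝ} {s t : ℝ}

lemma mono (h : IsArc C g₁ g₂ f U V s t) {s' t' : ℝ} (hs : s ≤ s') (ht : t' ≤ t) :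
    IsArc C g₁ g₂ f U V s' t' :=
  fun x hx => h x ⟨hs.trans hx.1, hx.2.trans ht⟩

lemma slope_le (h : IsArc C g₁ g₂ f U V s t) (hg : 0 ≤ g₁) (hf : IsSubpower p f) {α ε : ℝ}
    (hα : 0 ≤ α) (hε : 0 < ε) (hV : V s ≤ α) : ∀ x ∈ Icc s t, V x ≤ α + ε * (x - s) := by
  refine le_barrier (B' := fun _ => ε) (fun x => ?_) (by simpa using hV) (fun x hx => ?_)
  · simpa using (((hasDerivAt_id x).sub_const s).const_mul ε).const_add α
  · obtain ⟨hU, -, c, g, hc, -, hg1, -, hd⟩ := h x hx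
    refine ⟨_, hd, fun he => ?_⟩
    have h1 : 0 ≤ V x := by
      rw [he]; nlinarith [hx.1]
    have h2 := (hf _ hU).1
    nlinarith [mul_nonneg hc h1, mul_nonneg (hg.trans hg1) h2]

lemma le_slope_bound (h : IsArc C g₁ g₂ f U V s t) (hg : 0 ≤ g₁) (hf : IsSubpower p f) {α ε : ℝ}
    (hα : 0 ≤ α) (hε : 0 < ε) (hV : V s ≤ α) (hU : U s = 0) :
    ∀ x ∈ Icc s t, U x ≤ (α + ε * (t - s)) * (t - s) := by
  intro x hx
  have h1 := sub_le_of_hasDerivAt_le (y := U) (y' := V) (K := α + ε * (t - s)) hx.1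
    (fun z hz => (h z ⟨hz.1, hz.2.trans hx.2⟩).2.1) (fun z hz => by
      have := h.slope_le hg hf hα hε hV z ⟨hz.1, hz.2.trans hx.2⟩
      have := hz.2.trans hx.2
      nlinarith)
  have h2 : 0 ≤ α + ε * (t - s) := by nlinarith [hx.1, hx.2]
  have := hx.2
  nlinarith

lemma neg_slope_le (h : IsArc C g₁ g₂ f U V s t) (hg : 0 ≤ g₁) (hp : 0 ≤ p)
    (hf : IsSubpower p f) {M : ℝ} (hM : ∀ x ∈ Icc s t, U x ≤ M) (hV : 0 ≤ V s) :
    ∀ x ∈ Icc s t, -V x ≤ (g₂ * M ^ p + 1) * (x - s) := by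
  refine le_barrier (y := fun x => -V x) (B' := fun _ => g₂ * M ^ p + 1) (fun x => ?_)
    (by simpa using hV) (fun x hx => ?_)
  · simpa using ((hasDerivAt_id x).sub_const s).const_mul (g₂ * M ^ p + 1)
  · obtain ⟨hU, -, c, g, hc, -, hg1, hg2, hd⟩ := h x hx
    refine ⟨_, hd.neg, fun he => ?_⟩
    have hU' := hM x hx
    obtain ⟨h2, h3⟩ := hf _ hU
    have h4 : U x ^ p ≤ M ^ p := Real.rpow_le_rpow hU hU' hp
    have h5 : g * f (U x) ≤ g₂ * M ^ p := by
      apply mul_le_mul hg2 (h3.trans h4) h2 (by linarith)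
    have h6 : 0 ≤ M ^ p := by linarith
    have h7 : 0 ≤ (g₂ * M ^ p + 1) * (x - s) :=
      mul_nonneg (by have : 0 ≤ g₂ := by linarith
                     positivity) (by linarith [hx.1])
    have h1 : V x ≤ 0 := by linarith
    have := mul_nonpos_of_nonneg_of_nonpos hc h1
    linarith

lemma hasDerivAt_exp_mul {x c' : ℝ} (hd : HasDerivAt V c' x) :
    HasDerivAt (fun x => exp (C * (x - s)) * V x) (exp (C * (x - s)) * (C * V x + c')) x := by
  have h1 : HasDerivAt (fun x => C * (x - s)) C x := by
    simpa using ((hasDerivAt_id x).sub_const s).const_mul C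
  exact (h1.exp.mul hd).congr_deriv (by ring)

lemma le_exp_mul_slope (h : IsArc C g₁ g₂ f U V s t) (hC : 0 ≤ C) (hg : 0 ≤ g₁) (hp : 0 ≤ p)
    (hf : IsSubpower p f) {M T A K : ℝ} (hT : t - s ≤ T) (hM : ∀ x ∈ Icc s t, U x ≤ M)
    (hV : A ≤ V s) (hK : g₂ * M ^ p * exp (C * T) < K) (hK0 : 0 ≤ K) (hA : 0 < A - K * T) :
    ∀ x ∈ Icc s t, A - K * (x - s) ≤ exp (C * (x - s)) * V x := by
  have key := le_barrier (y := fun x => -(exp (C * (x - s)) * V x)) (s := s) (t := t)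
    (B := fun x => -A + K * (x - s)) (B' := fun _ => K) (fun x => ?_)
    (by simpa using hV) (fun x hx => ?_)
  · intro x hx
    have := key x hx
    linarith
  · simpa using (((hasDerivAt_id x).sub_const s).const_mul K).const_add (-A)
  · obtain ⟨hU, -, c, g, hc, hcC, hg1, hg2, hd⟩ := h x hx
    refine ⟨_, (hasDerivAt_exp_mul hd).neg, fun he => ?_⟩
    obtain ⟨h2, h3⟩ := hf _ hU
    have h4 : U x ^ p ≤ M ^ p := Real.rpow_le_rpow hU (hM x hx) hp
    have h5 : g * f (U x) ≤ g₂ * M ^ p := by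
      apply mul_le_mul hg2 (h3.trans h4) h2 (by linarith)
    have hE : 0 < exp (C * (x - s)) := exp_pos _
    have hE2 : exp (C * (x - s)) ≤ exp (C * T) := by
      apply exp_le_exp.2; apply mul_le_mul_of_nonneg_left _ hC; linarith [hx.2]
    have h7 : K * (x - s) ≤ K * T := mul_le_mul_of_nonneg_left (by linarith [hx.2]) hK0
    have hV0 : 0 < V x := by
      have : 0 < exp (C * (x - s)) * V x := by linarith
      exact (mul_pos_iff_of_pos_left hE).1 this
    have h8 : 0 ≤ (C - c) * V x := mul_nonneg (by linarith) hV0.le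
    have h9 : 0 ≤ g * f (U x) := mul_nonneg (by linarith) h2
    have h10 : exp (C * (x - s)) * (g * f (U x)) ≤ exp (C * T) * (g₂ * M ^ p) :=
      mul_le_mul hE2 h5 h9 (exp_pos _).le
    nlinarith [mul_nonneg hE.le h8]

lemma slope_nonpos (h : IsArc C g₁ g₂ f U V s t) (hg : 0 ≤ g₁) (hf : IsSubpower p f)
    (hV : V s ≤ 0) : ∀ x ∈ Icc s t, V x ≤ 0 := by
  intro x hx
  refine le_of_forall_pos_le_add fun ε hε => ?_
  have h1 : 0 < 1 + (x - s) := by linarith [hx.1]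
  have h2 := h.slope_le hg hf le_rfl (div_pos hε h1) hV x hx
  have h3 : ε / (1 + (x - s)) * (x - s) ≤ ε := by
    rw [div_mul_eq_mul_div, div_le_iff₀ h1]; nlinarith
  linarith

lemma exp_mul_slope_le (h : IsArc C g₁ g₂ f U V s t) (hg : 0 ≤ g₁) (hf : IsSubpower p f)
    (hV : V s ≤ 0) : ∀ x ∈ Icc s t, exp (C * (x - s)) * V x ≤ V s := by
  intro x hx
  have hneg := h.slope_nonpos hg hf hV
  have key := sub_le_of_hasDerivAt_le (y := fun x => exp (C * (x - s)) * V x)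
    (y' := fun z => exp (C * (z - s)) * (C * V z + deriv V z)) (K := 0) hx.1
    (fun z hz => by
      obtain ⟨-, -, c, g, -, -, -, -, hd⟩ := h z ⟨hz.1, hz.2.trans hx.2⟩
      rw [hd.deriv]
      exact hasDerivAt_exp_mul hd)
    (fun z hz => by
      have hz' : z ∈ Icc s t := ⟨hz.1, hz.2.trans hx.2⟩
      obtain ⟨hU, -, c, g, hc, hcC, hg1, -, hd⟩ := h z hz'
      rw [hd.deriv]
      have h1 := mul_nonpos_of_nonneg_of_nonpos (sub_nonneg.2 hcC) (hneg z hz')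
      have h2 := mul_nonneg (hg.trans hg1) (hf _ hU).1
      exact mul_nonpos_of_nonneg_of_nonpos (exp_pos _).le (by nlinarith))
  simp only [sub_self, mul_zero, exp_zero, one_mul, zero_mul] at key
  linarith

lemma slope_le_neg (h : IsArc C g₁ g₂ f U V s t) (hC : 0 ≤ C) (hg : 0 ≤ g₁)
    (hf : IsSubpower p f) {T D : ℝ} (hT : t - s ≤ T) (hD : 0 ≤ D)
    (hV : V s ≤ -(exp (C * T) * D)) : ∀ x ∈ Icc s t, V x ≤ -D := by
  intro x hx
  have hV0 : V s ≤ 0 := hV.trans (neg_nonpos.2 (mul_nonneg (exp_pos _).le hD))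
  have h1 := h.exp_mul_slope_le hg hf hV0 x hx
  have h2 := h.slope_nonpos hg hf hV0 x hx
  have hE2 : exp (C * (x - s)) ≤ exp (C * T) := by
    apply exp_le_exp.2; apply mul_le_mul_of_nonneg_left _ hC; linarith [hx.2]
  have h3 : exp (C * T) * V x ≤ exp (C * T) * (-D) := by nlinarith
  exact le_of_mul_le_mul_left h3 (exp_pos _)

/-- Where `f` is steep, the Riccati variable `V / U` runs from `+∞` to `-∞` in a short time. -/
lemma length_lt_of_steep (h : IsArc C g₁ g₂ f U V s t) (hg : 0 ≤ g₁) {N κ : ℝ} (hκ : 0 < κ)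
    (hN0 : 0 ≤ N) (hN : C ^ 2 + κ ^ 2 ≤ 2 * (g₁ * N)) (hU : ∀ x ∈ Icc s t, 0 < U x)
    (hsteep : ∀ x ∈ Icc s t, N * U x ≤ f (U x)) (hst : s ≤ t) : κ * (t - s) < 2 * π := by
  have hd : ∀ x ∈ Icc s t, ∃ y', HasDerivAt (fun x => arctan (V x / U x / κ)) y' x ∧
      y' ≤ -(κ / 2) := by
    intro x hx
    obtain ⟨-, hdU, c, g, hc, hcC, hg1, -, hdV⟩ := h x hx
    have hUx := hU x hx
    refine ⟨_, ((hdV.div hdU hUx.ne').div_const κ).arctan, ?_⟩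
    set q := V x / U x with hq
    have hVq : V x = q * U x := by rw [hq]; field_simp
    have hb : g₁ * N ≤ g * f (U x) / U x := by
      rw [le_div_iff₀ hUx]
      have := hsteep x hx
      calc g₁ * N * U x = g₁ * (N * U x) := by ring
        _ ≤ g * f (U x) := by
          apply mul_le_mul hg1 this (by positivity) (by linarith)
    have he : ((-(c * V x) - g * f (U x)) * U x - V x * V x) / U x ^ 2
        = -(c * q) - g * f (U x) / U x - q ^ 2 := by
      rw [hVq]; field_simp
    rw [he]
    have hcq : -(c * q) ≤ (C ^ 2 + q ^ 2) / 2 := by nlinarith [sq_nonneg (c + q)]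
    have hle : -(c * q) - g * f (U x) / U x - q ^ 2 ≤ -((κ ^ 2 + q ^ 2) / 2) := by linarith
    have hpos : 0 < 1 + (q / κ) ^ 2 := by positivity
    rw [Pi.div_apply, ← hq, one_div, inv_mul_le_iff₀ hpos, div_le_iff₀ hκ]
    calc _ ≤ _ := hle
      _ = _ := by field_simp
  choose! y' hy' using hd
  have h1 := sub_le_of_hasDerivAt_le hst (fun x hx => (hy' x hx).1) (fun x hx => (hy' x hx).2)
  have h2 := neg_pi_div_two_lt_arctan (V t / U t / κ)
  have h3 := arctan_lt_pi_div_two (V s / U s / κ)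
  linarith

end IsArc

/-- A steep start forces the arc to close up within time `3 η`, with a steep end. -/
lemma IsArc.exists_steep_start {C g₁ g₂ p N κ m η T : ℝ} (hC : 0 ≤ C) (hg₁ : 0 ≤ g₁)
    (hp : 0 ≤ p) (hκ : 0 < κ) (hN0 : 0 ≤ N) (hN : C ^ 2 + κ ^ 2 ≤ 2 * (g₁ * N)) (hm : 0 < m)
    (hη : 0 < η) (hκη : 2 * π ≤ κ * η) (S : ℝ) :
    ∃ A, ∀ f, IsSubpower p f → (∀ x, m ≤ x → N * x ≤ f x) → ∀ U V s t,
      IsArc C g₁ g₂ f U V s t → A ≤ V s → U s = 0 → s < t → t - s ≤ T →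
      (t = s + 3 * η → False) ∧ (U t = 0 → t ≤ s + 3 * η → V t ≤ -S) := by
  set E := exp (C * T) with hE
  have hE0 : 0 < E := exp_pos _
  obtain ⟨M, hM1, hM2⟩ : ∃ M, m * (1 + E) ≤ M ∧ |S| * E * (3 * η) ≤ M :=
    ⟨_, le_max_left _ _, le_max_right _ _⟩
  have hmM : m ≤ M := by nlinarith
  have hM0 : 0 < M := hm.trans_le hmM
  set K := |g₂| * M ^ p * E + 1 with hK
  have hMp : 0 < M ^ p := rpow_pos_of_pos hM0 p
  have hK0 : 0 ≤ K := by positivity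
  have hK1 : g₂ * M ^ p * E < K := by
    have : g₂ * M ^ p * E ≤ |g₂| * M ^ p * E := by gcongr; exact le_abs_self _
    linarith
  refine ⟨M * (1 / η) * E + K * |T|, fun f hf hsteep U V s t h hA hUs hst htT => ?_⟩
  have hT0 : 0 < T := by linarith
  rw [abs_of_pos hT0] at hA
  have reach : t = s + 3 * η ∨ U t = 0 → ∃ t₁ ∈ Icc s t, t₁ ≤ s + η ∧ M ≤ U t₁ := by
    intro hor
    by_contra! hlt
    obtain ⟨t', ht', htη, ht's⟩ : ∃ t' ∈ Icc s t, t' ≤ s + η ∧ s < t' ∧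
        (U t' = 0 ∨ t' = s + η) := by
      by_cases hc : t ≤ s + η
      · rcases hor with hor | hor
        · linarith
        · exact ⟨t, ⟨hst.le, le_rfl⟩, hc, hst, Or.inl hor⟩
      · exact ⟨s + η, ⟨by linarith, by linarith⟩, le_rfl, by linarith, Or.inr rfl⟩
    have h' := h.mono le_rfl ht'.2
    have hlow := h'.le_exp_mul_slope hC hg₁ hp hf (M := M) (T := T) (K := K)
      (A := M * (1 / η) * E + K * T) (by linarith [ht'.2])
      (fun x hx => (hlt x ⟨hx.1, hx.2.trans ht'.2⟩ (hx.2.trans htη)).le) hA hK1 hK0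
      (by have : 0 < M * (1 / η) * E := by positivity
          linarith)
    have hV : ∀ x ∈ Icc s t', M * (1 / η) ≤ V x := by
      intro x hx
      have h1 := hlow x hx
      have h2 : exp (C * (x - s)) ≤ E := by
        apply exp_le_exp.2; apply mul_le_mul_of_nonneg_left _ hC; linarith [hx.2, ht'.2]
      have h3 : K * (x - s) ≤ K * T :=
        mul_le_mul_of_nonneg_left (by linarith [hx.2, ht'.2]) hK0
      have h4 : M * (1 / η) * E ≤ exp (C * (x - s)) * V x := by linarith
      have h5 : 0 < V x := by
        have : 0 < M * (1 / η) * E := by positivity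
        exact (mul_pos_iff_of_pos_left (exp_pos _)).1 (this.trans_le h4)
      have h6 : M * (1 / η) * E ≤ V x * E := by nlinarith
      exact le_of_mul_le_mul_right h6 hE0
    have hgrow := sub_le_of_hasDerivAt_le (y := fun x => -U x) (y' := fun x => -V x)
      (K := -(M * (1 / η))) ht'.1 (fun x hx => (h' x hx).2.1.neg)
      (fun x hx => neg_le_neg (hV x hx))
    have hpos : 0 < M * (1 / η) * (t' - s) := mul_pos (by positivity) (by linarith [ht's.1])
    rcases ht's.2 with h0 | h0
    · simp only [hUs, h0] at hgrow
      linarith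
    · have h1 := hlt t' ht' htη
      have h2 : M * (1 / η) * (t' - s) = M := by rw [h0]; field_simp; ring
      simp only [hUs] at hgrow
      linarith
  have mvt : ∀ x y, s ≤ x → x < y → y ≤ t → ∃ ξ ∈ Ioo x y, V ξ = (U y - U x) / (y - x) := by
    intro x y hx hxy hy
    exact exists_hasDerivAt_eq_slope U V hxy
      (fun z hz => (h z ⟨hx.trans hz.1, hz.2.trans hy⟩).2.1.continuousAt.continuousWithinAt)
      (fun z hz => (h z ⟨hx.trans hz.1.le, hz.2.le.trans hy⟩).2.1)
  constructor
  · intro ht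
    obtain ⟨t₁, ht₁, ht₁η, hMt⟩ := reach (Or.inl ht)
    obtain ⟨t₃, ht₃, hlt⟩ : ∃ t₃ ∈ Icc t₁ (t₁ + η), U t₃ < m := by
      by_contra! hge
      have := (h.mono (s' := t₁) (t' := t₁ + η) ht₁.1 (by linarith)).length_lt_of_steep hg₁ hκ
        hN0 hN (fun x hx => hm.trans_le (hge x hx)) (fun x hx => hsteep _ (hge x hx)) (by linarith)
      have h2 : t₁ + η - t₁ = η := by ring
      rw [h2] at this
      linarith
    have ht₁₃ : t₁ < t₃ := by
      rcases ht₃.1.eq_or_lt with he | hl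
      · rw [← he] at hlt; linarith
      · exact hl
    obtain ⟨ξ, hξ, hVξ⟩ := mvt t₁ t₃ ht₁.1 ht₁₃ (by linarith [ht₃.2])
    have hVξ' : V ξ ≤ -(E * (m / η)) := by
      rw [hVξ, div_le_iff₀ (by linarith)]
      have h1 : E * (m / η) * (t₃ - t₁) ≤ E * m := by
        have : m / η * (t₃ - t₁) ≤ m := by
          rw [div_mul_eq_mul_div, div_le_iff₀ hη]; nlinarith [ht₃.2]
        nlinarith
      nlinarith
    have hdec := (h.mono (s' := ξ) (t' := t) (by linarith [hξ.1, ht₁.1]) le_rfl).slope_le_neg hC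
      hg₁ hf (T := T) (by linarith [hξ.1, ht₁.1]) (by positivity) hVξ'
    have hend := sub_le_of_hasDerivAt_le (y := U) (y' := V) (s := t₃) (t := t₃ + η)
      (K := -(m / η)) (by linarith)
      (fun x hx => (h x ⟨by linarith [hx.1, ht₁.1], by linarith [hx.2, ht₃.2]⟩).2.1)
      (fun x hx => hdec x ⟨by linarith [hx.1, hξ.2], by linarith [hx.2, ht₃.2]⟩)
    have h0 := (h (t₃ + η) ⟨by linarith [ht₁.1], by linarith [ht₃.2]⟩).1
    have : -(m / η) * (t₃ + η - t₃) = -m := by field_simp; ring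
    linarith
  · intro hU ht
    obtain ⟨t₁, ht₁, ht₁η, hMt⟩ := reach (Or.inr hU)
    have ht₁t : t₁ < t := by
      rcases ht₁.2.eq_or_lt with he | hl
      · rw [he, hU] at hMt; linarith
      · exact hl
    obtain ⟨ξ, hξ, hVξ⟩ := mvt t₁ t ht₁.1 ht₁t le_rfl
    have hVξ' : V ξ ≤ -(E * |S|) := by
      rw [hVξ, hU, div_le_iff₀ (by linarith)]
      have h1 : E * |S| * (t - t₁) ≤ E * |S| * (3 * η) :=
        mul_le_mul_of_nonneg_left (by linarith [ht₁.1]) (by positivity)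
      linarith
    have hdec := (h.mono (s' := ξ) (t' := t) (by linarith [hξ.1, ht₁.1]) le_rfl).slope_le_neg hC
      hg₁ hf (T := T) (by linarith [hξ.1, ht₁.1]) (abs_nonneg S) hVξ' t ⟨hξ.2.le, le_rfl⟩
    linarith [le_abs_self S]

/-- In polar coordinates `u = e ^ w sin θ`, `u' = e ^ w cos θ`, the equation
`u'' = -c u' - g f(u)` on `[a, b]` with variable coefficients `c ∈ [0, C]`, `g ∈ [g₁, g₂]`. -/
def IsPolarSol (C g₁ g₂ : ℝ) (f w θ : ℝ → ℝ) (a b : ℝ) : Prop :=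
  ∀ x ∈ Icc a b, ∃ c g h, 0 ≤ c ∧ c ≤ C ∧ g₁ ≤ g ∧ g ≤ g₂ ∧
    exp (w x) * h = -(c * (exp (w x) * cos (θ x))) - g * f (exp (w x) * sin (θ x)) ∧
    HasDerivAt w (sin (θ x) * cos (θ x) + cos (θ x) * h) x ∧
    HasDerivAt θ (cos (θ x) ^ 2 - sin (θ x) * h) x

lemma odd_neg_one_pow_mul {f : ℝ → ℝ} (hodd : ∀ x, f (-x) = -f x) (j : ℕ) (x : ℝ) :
    f ((-1) ^ j * x) = (-1) ^ j * f x := by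
  rcases neg_one_pow_eq_or ℝ j with h | h <;> simp [h, hodd]

/-- Polar coordinates turn `w' = sin θ cos θ + cos θ h`, `θ' = cos² θ - sin θ h` into
`(e ^ w sin (θ - φ))' = e ^ w cos (θ - φ)`. -/
lemma hasDerivAt_exp_mul_sin_sub {w θ : ℝ → ℝ} {x h : ℝ} (j : ℕ)
    (hw : HasDerivAt w (sin (θ x) * cos (θ x) + cos (θ x) * h) x)
    (hθ : HasDerivAt θ (cos (θ x) ^ 2 - sin (θ x) * h) x) :
    HasDerivAt (fun y => exp (w y) * sin (θ y - j * π)) (exp (w x) * cos (θ x - j * π)) x ∧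
    HasDerivAt (fun y => exp (w y) * cos (θ y - j * π)) ((-1) ^ j * (exp (w x) * h)) x := by
  simp only [sin_sub_nat_mul_pi, cos_sub_nat_mul_pi]
  have hsc := sin_sq_add_cos_sq (θ x)
  constructor
  · refine (hw.exp.mul (hθ.sin.const_mul _)).congr_deriv ?_
    linear_combination exp (w x) * (-1) ^ j * cos (θ x) * hsc
  · refine (hw.exp.mul (hθ.cos.const_mul _)).congr_deriv ?_
    linear_combination (exp (w x) * (-1) ^ j * h) * hsc

lemma exp_le_abs_add_abs (w θ : ℝ) : exp w ≤ |exp w * sin θ| + |exp w * cos θ| := by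
  have hsc := sin_sq_add_cos_sq θ
  have h1 := abs_sin_le_one θ
  have h2 := abs_cos_le_one θ
  have h3 := sq_abs (sin θ)
  have h4 := sq_abs (cos θ)
  have : 1 ≤ |sin θ| + |cos θ| := by nlinarith [abs_nonneg (sin θ), abs_nonneg (cos θ)]
  rw [abs_mul, abs_mul, abs_exp]
  nlinarith [exp_pos w]

namespace IsPolarSol

variable {C g₁ g₂ p : ℝ} {f w θ : ℝ → ℝ} {a b : ℝ}

lemma continuousOn (h : IsPolarSol C g₁ g₂ f w θ a b) : ContinuousOn θ (Icc a b) := fun x hx => by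
  obtain ⟨_, _, _, -, -, -, -, -, -, hθ⟩ := h x hx
  exact hθ.continuousAt.continuousWithinAt

/-- The angle crosses multiples of `π` only upwards. -/
lemma lt_angle (h : IsPolarSol C g₁ g₂ f w θ a b) {s x : ℝ} (j : ℕ) (hs : a ≤ s) (hx : x ≤ b)
    (hsx : s < x) (hj : j * π ≤ θ s) : j * π < θ x := by
  have hone : ∀ z ∈ Icc a b, θ z = j * π → HasDerivAt θ 1 z := fun z hz hθz => by
    obtain ⟨_, _, k, -, -, -, -, -, -, hθ⟩ := h z hz
    refine hθ.congr_deriv ?_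
    rw [hθz, sin_nat_mul_pi, cos_sq', sin_nat_mul_pi]
    ring
  have hge : ∀ z ∈ Icc s x, -θ z ≤ -(j * π) := by
    refine le_barrier (y := fun z => -θ z) (B' := fun _ => 0) (fun z => hasDerivAt_const z _)
      (neg_le_neg hj) (fun z hz => ?_)
    have hz' : z ∈ Icc a b := ⟨hs.trans hz.1, hz.2.trans hx⟩
    obtain ⟨_, _, _, -, -, -, -, -, -, hθ⟩ := h z hz'
    refine ⟨_, hθ.neg, fun he => ?_⟩
    rw [hθ.unique (hone z hz' (by linarith))]
    norm_num
  refine lt_of_le_of_ne (by linarith [hge x ⟨hsx.le, le_rfl⟩]) fun he => ?_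
  have hd := hone x ⟨hs.trans hsx.le, hx⟩ he.symm
  have hev : ∀ᶠ z in nhdsWithin x (Iio x), θ z < θ x := by
    have h1 := hd.hasDerivWithinAt (s := Iio x)
    rw [hasDerivWithinAt_iff_tendsto_slope' (by simp)] at h1
    filter_upwards [h1.eventually (lt_mem_nhds one_pos), self_mem_nhdsWithin] with z hz hzx
    have hzx' : z - x < 0 := by simpa using hzx
    have := slope_def_field θ x z
    rw [this, div_pos_iff] at hz
    rcases hz with hz | hz
    · linarith
    · linarith
  obtain ⟨z, hz, hzs⟩ := (hev.and (Ioo_mem_nhdsLT hsx)).exists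
  linarith [hge z ⟨hzs.1.le, hzs.2.le⟩]

lemma exists_angle_eq (h : IsPolarSol C g₁ g₂ f w θ a b) {s x c : ℝ} (hs : a ≤ s) (hx : x ≤ b)
    (hsx : s ≤ x) (h1 : θ s ≤ c) (h2 : c ≤ θ x) : ∃ y ∈ Icc s x, θ y = c :=
  intermediate_value_Icc hsx (h.continuousOn.mono (Icc_subset_Icc hs hx)) ⟨h1, h2⟩

lemma angle_mem (h : IsPolarSol C g₁ g₂ f w θ a b) {s t : ℝ} (j : ℕ) (hs : a ≤ s) (ht : t ≤ b)
    (h1 : j * π ≤ θ s) (h2 : θ t ≤ (j + 1) * π) :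
    ∀ x ∈ Icc s t, θ x ∈ Icc (j * π) ((j + 1) * π) := by
  intro x hx
  constructor
  · rcases hx.1.eq_or_lt with rfl | hlt
    · exact h1
    · exact (h.lt_angle j hs (hx.2.trans ht) hlt h1).le
  · by_contra! hgt
    rcases hx.2.eq_or_lt with rfl | hlt
    · linarith
    · have := h.lt_angle (j + 1) (hs.trans hx.1) ht hlt (by push_cast; exact hgt.le)
      push_cast at this
      linarith

lemma isArc (h : IsPolarSol C g₁ g₂ f w θ a b) (hodd : ∀ x, f (-x) = -f x) {s t : ℝ} (j : ℕ)
    (hs : a ≤ s) (ht : t ≤ b) (h1 : j * π ≤ θ s) (h2 : θ t ≤ (j + 1) * π) :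
    IsArc C g₁ g₂ f (fun x => exp (w x) * sin (θ x - j * π))
      (fun x => exp (w x) * cos (θ x - j * π)) s t := by
  intro x hx
  have hmem := h.angle_mem j hs ht h1 h2 x hx
  obtain ⟨c, g, k, hc, hcC, hg1, hg2, hk, hw, hθ⟩ := h x ⟨hs.trans hx.1, hx.2.trans ht⟩
  obtain ⟨hU, hV⟩ := hasDerivAt_exp_mul_sin_sub j hw hθ
  refine ⟨mul_nonneg (exp_pos _).le (sin_nonneg_of_nonneg_of_le_pi (by linarith [hmem.1])
    (by linarith [hmem.2])), hU, c, g, hc, hcC, hg1, hg2, hV.congr_deriv ?_⟩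
  have := odd_neg_one_pow_mul hodd j (exp (w x) * sin (θ x))
  simp only [sin_sub_nat_mul_pi, cos_sub_nat_mul_pi]
  rw [show exp (w x) * ((-1) ^ j * sin (θ x)) = (-1) ^ j * (exp (w x) * sin (θ x)) by ring, this,
    hk]
  ring

end IsPolarSol

/-- Amplitude bound over the first `j` nodal regions, uniform in the nonlinearity. -/
lemma IsPolarSol.exists_amplitude_bound {C g₁ g₂ p a b : ℝ} (hg₁ : 0 ≤ g₁) (hg₂ : 0 ≤ g₂)
    (hp : 0 ≤ p) (hab : a < b) (α : ℝ) (j : ℕ) :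
    ∃ D, ∀ f w θ, IsSubpower p f → (∀ x, f (-x) = -f x) → IsPolarSol C g₁ g₂ f w θ a b →
      θ a = 0 → exp (w a) ≤ α → ∀ x ∈ Icc a b, θ x ≤ j * π → exp (w x) ≤ D := by
  induction j with
  | zero =>
    refine ⟨α, fun f w θ hf hodd h hθ hα x hx hθx => ?_⟩
    rcases hx.1.eq_or_lt with rfl | hlt
    · exact hα
    · have := h.lt_angle 0 le_rfl hx.2 hlt (by simp [hθ])
      linarith
  | succ j ih =>
    obtain ⟨D, hD⟩ := ih
    set T := b - a with hT
    have hT0 : 0 < T := by linarith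
    set M := (|D| + 1 * T) * T with hM
    set Q := (g₂ * M ^ p + 1) * T with hQ
    have hM0 : 0 ≤ M := by positivity
    have hQ0 : 0 ≤ Q := by positivity
    refine ⟨|D| + M + (|D| + T + Q), fun f w θ hf hodd h hθ hα x hx hθx => ?_⟩
    by_cases hc : θ x ≤ j * π
    · have := hD f w θ hf hodd h hθ hα x hx hc
      linarith [le_abs_self D, abs_nonneg D]
    push Not at hc
    obtain ⟨s, hs, hθs⟩ := h.exists_angle_eq (c := j * π) le_rfl hx.2 hx.1
      (by rw [hθ]; positivity) hc.le
    have hsb : s ∈ Icc a b := ⟨hs.1, hs.2.trans hx.2⟩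
    have hDs := hD f w θ hf hodd h hθ hα s hsb hθs.le
    have harc := h.isArc hodd j hs.1 hx.2 hθs.ge (by push_cast at hθx; exact hθx)
    have hxs : x - s ≤ T := by linarith [hs.1, hx.2]
    have hUs : exp (w s) * sin (θ s - j * π) = 0 := by simp [hθs]
    have hVs : exp (w s) * cos (θ s - j * π) = exp (w s) := by simp [hθs]
    have hVs' : exp (w s) * cos (θ s - j * π) ≤ |D| := by rw [hVs]; exact hDs.trans (le_abs_self D)
    have hUle : ∀ z ∈ Icc s x, exp (w z) * sin (θ z - j * π) ≤ M := fun z hz =>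
      (harc.le_slope_bound hg₁ hf (abs_nonneg D) one_pos hVs' hUs z hz).trans (by
        have : 0 ≤ x - s := by linarith [hs.2]
        have h1 : |D| + 1 * (x - s) ≤ |D| + 1 * T := by linarith
        exact mul_le_mul h1 hxs this (by positivity))
    have hx' : x ∈ Icc s x := ⟨hs.2, le_rfl⟩
    have e1 := hUle x hx'
    have e2 := (harc x hx').1
    have e3 := harc.slope_le hg₁ hf (abs_nonneg D) one_pos hVs' x hx'
    have e4 := harc.neg_slope_le hg₁ hp hf hUle (by rw [hVs]; exact (exp_pos _).le) x hx'
    have e5 : (g₂ * M ^ p + 1) * (x - s) ≤ Q :=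
      mul_le_mul_of_nonneg_left hxs (by positivity)
    simp only at e1 e2 e3 e4
    have hV : |exp (w x) * cos (θ x - j * π)| ≤ |D| + T + Q :=
      abs_le.2 ⟨by linarith [abs_nonneg D], by linarith⟩
    have := exp_le_abs_add_abs (w x) (θ x - j * π)
    rw [abs_of_nonneg e2] at this
    linarith [abs_nonneg D]

/-- Solutions with a steep start complete `j` nodal regions within time `3 η j`. -/
lemma IsPolarSol.exists_fast_rotation {C g₁ g₂ p N κ m η a b : ℝ} (hC : 0 ≤ C) (hg₁ : 0 ≤ g₁)
    (hp : 0 ≤ p) (hκ : 0 < κ) (hN0 : 0 ≤ N) (hN : C ^ 2 + κ ^ 2 ≤ 2 * (g₁ * N)) (hm : 0 < m)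
    (hη : 0 < η) (hκη : 2 * π ≤ κ * η) (j : ℕ) (hj : a + j * (3 * η) ≤ b) (S : ℝ) :
    ∃ A, ∀ f w θ, IsSubpower p f → (∀ x, f (-x) = -f x) → (∀ x, m ≤ x → N * x ≤ f x) →
      IsPolarSol C g₁ g₂ f w θ a b → θ a = 0 → A ≤ exp (w a) →
      ∃ t ∈ Icc a (a + j * (3 * η)), θ t = j * π ∧ S ≤ exp (w t) := by
  induction j generalizing S with
  | zero =>
    refine ⟨S, fun f w θ hf hodd hsteep h hθ hA => ⟨a, by simp, by simp [hθ], hA⟩⟩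
  | succ j ih =>
    push_cast at hj
    obtain ⟨A₁, hA₁⟩ := IsArc.exists_steep_start (T := b - a) hC hg₁ hp hκ hN0 hN hm hη hκη S
    obtain ⟨A, hA⟩ := ih (by nlinarith) A₁
    refine ⟨A, fun f w θ hf hodd hsteep h hθ hAw => ?_⟩
    obtain ⟨s, hs, hθs, hSs⟩ := hA f w θ hf hodd hsteep h hθ hAw
    have hsb : s + 3 * η ≤ b := by linarith [hs.2]
    have hVs : exp (w s) * cos (θ s - j * π) = exp (w s) := by simp [hθs]
    have hUs : exp (w s) * sin (θ s - j * π) = 0 := by simp [hθs]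
    have hreach : (j + 1) * π ≤ θ (s + 3 * η) := by
      by_contra! hlt
      have harc := h.isArc hodd j hs.1 hsb hθs.ge hlt.le
      exact (hA₁ f hf hsteep _ _ _ _ harc (by rw [hVs]; exact hSs) hUs (by linarith)
        (by linarith [hs.1])).1 rfl
    obtain ⟨t, ht, hθt⟩ := h.exists_angle_eq hs.1 hsb (by linarith)
      (by rw [hθs]; nlinarith [pi_pos]) hreach
    have hst : s < t := by
      rcases ht.1.eq_or_lt with he | hl
      · rw [← he, hθs] at hθt
        nlinarith [pi_pos]
      · exact hl
    have harc := h.isArc hodd j hs.1 (ht.2.trans hsb) hθs.ge hθt.le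
    have e : θ t - j * π = π := by rw [hθt]; ring
    have hVt := (hA₁ f hf hsteep _ _ _ _ harc (by rw [hVs]; exact hSs) hUs hst
        (by linarith [hs.1, ht.2])).2 (by simp [e]) ht.2
    refine ⟨t, ⟨hs.1.trans ht.1, ?_⟩, by rw [hθt]; push_cast; ring, ?_⟩
    · push_cast
      linarith [hs.2, ht.2]
    · simp only [e, cos_pi] at hVt
      linarith

/-- Solutions with a shallow start do not complete a nodal region. -/
lemma IsPolarSol.exists_slow_start {C g₁ g₂ p a b : ℝ} (hC : 0 ≤ C) (hg₁ : 0 ≤ g₁)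
    (hg₂ : 0 < g₂) (hp : 1 < p) (hab : a < b) :
    ∃ α, 0 < α ∧ ∀ f w θ, IsSubpower p f → (∀ x, f (-x) = -f x) →
      IsPolarSol C g₁ g₂ f w θ a b → θ a = 0 → exp (w a) = α → θ b ≤ π := by
  set T := b - a with hT
  have hT0 : 0 < T := by linarith
  set B := 2 * (g₂ * ((1 + 1 * T) * T) ^ p * exp (C * T)) with hB
  have hB0 : 0 < B := by positivity
  have hp1 : p - 1 ≠ 0 := by linarith
  obtain ⟨α, hα, hαB⟩ : ∃ α : ℝ, 0 < α ∧ α ^ (p - 1) = 1 / (2 * (B * T)) :=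
    ⟨(1 / (2 * (B * T))) ^ (p - 1)⁻¹, by positivity,
      Real.rpow_inv_rpow (by positivity) hp1⟩
  have hαp : α ^ p = α * α ^ (p - 1) := by
    rw [Real.rpow_sub_one hα.ne']; field_simp
  refine ⟨α, hα, fun f w θ hf hodd h hθ hw => ?_⟩
  by_contra! hlt
  obtain ⟨t, ht, hθt⟩ := h.exists_angle_eq le_rfl le_rfl hab.le (by rw [hθ]; exact pi_pos.le) hlt.le
  have harc := h.isArc hodd 0 (s := a) (t := t) le_rfl ht.2 (by simp [hθ]) (by simp [hθt])
  simp only [Nat.cast_zero, zero_mul, sub_zero] at harc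
  have htT : t - a ≤ T := by linarith [ht.2]
  have hta : 0 ≤ t - a := by linarith [ht.1]
  have hUle : ∀ z ∈ Icc a t, exp (w z) * sin (θ z) ≤ α * ((1 + 1 * T) * T) := fun z hz =>
    (harc.le_slope_bound (α := α) (ε := α) hg₁ hf hα.le hα (by simp [hθ, hw]) (by simp [hθ])
      z hz).trans (by
        calc (α + α * (t - a)) * (t - a) ≤ (α + α * T) * T := by gcongr
          _ = _ := by ring)
  have hMp : (α * ((1 + 1 * T) * T)) ^ p = α ^ p * ((1 + 1 * T) * T) ^ p :=
    Real.mul_rpow hα.le (by positivity)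
  have hαp0 : 0 < α ^ p := Real.rpow_pos_of_pos hα p
  have hKT : α ^ p * B * T = α / 2 := by rw [hαp, hαB]; field_simp
  have hlow := harc.le_exp_mul_slope (A := α) (T := T) (K := α ^ p * B) hC hg₁ (by linarith) hf htT
    hUle (by simp [hθ, hw])
    (by rw [hMp]
        have : 0 < α ^ p * B := by positivity
        have e : g₂ * (α ^ p * ((1 + 1 * T) * T) ^ p) * exp (C * T) = α ^ p * B / 2 := by
          rw [hB]; ring
        linarith)
    (by positivity) (by rw [hKT]; linarith) t ⟨ht.1, le_rfl⟩
  have h1 : α ^ p * B * (t - a) ≤ α ^ p * B * T := by gcongr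
  simp only [hθt, cos_pi] at hlow
  nlinarith [mul_pos (exp_pos (C * (t - a))) (exp_pos (w t))]

/-- A family `φ r`, `r : ℝ`, of functions that are uniformly bounded and uniformly Lipschitz
on `S`. -/
def BddLip {E : Type*} [PseudoMetricSpace E] (S : Set E) (φ : ℝ → E → ℝ) : Prop :=
  ∃ B L : ℝ, 0 ≤ B ∧ 0 ≤ L ∧ ∀ r, ∀ x ∈ S, |φ r x| ≤ B ∧ ∀ y ∈ S, |φ r x - φ r y| ≤ L * dist x y

namespace BddLip

lemma add {E : Type*} [PseudoMetricSpace E] {S : Set E} {φ ψ : ℝ → E → ℝ} (hφ : BddLip S φ)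
    (hψ : BddLip S ψ) : BddLip S (fun r x => φ r x + ψ r x) := by
  obtain ⟨B, L, hB, hL, h⟩ := hφ
  obtain ⟨B', L', hB', hL', h'⟩ := hψ
  refine ⟨B + B', L + L', by positivity, by positivity, fun r x hx => ⟨?_, fun y hy => ?_⟩⟩
  · exact (abs_add_le _ _).trans (add_le_add (h r x hx).1 (h' r x hx).1)
  · have h1 := (h r x hx).2 y hy
    have h2 := (h' r x hx).2 y hy
    calc _ = |(φ r x - φ r y) + (ψ r x - ψ r y)| := by ring_nf
      _ ≤ _ := abs_add_le _ _
      _ ≤ _ := by linarith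

lemma mul {E : Type*} [PseudoMetricSpace E] {S : Set E} {φ ψ : ℝ → E → ℝ} (hφ : BddLip S φ)
    (hψ : BddLip S ψ) : BddLip S (fun r x => φ r x * ψ r x) := by
  obtain ⟨B, L, hB, hL, h⟩ := hφ
  obtain ⟨B', L', hB', hL', h'⟩ := hψ
  refine ⟨B * B', B * L' + L * B', by positivity, by positivity, fun r x hx => ⟨?_, fun y hy => ?_⟩⟩
  · rw [abs_mul]
    exact mul_le_mul (h r x hx).1 (h' r x hx).1 (abs_nonneg _) hB
  · have h1 := (h r x hx).2 y hy
    have h2 := (h' r x hx).2 y hy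
    calc _ = |φ r x * (ψ r x - ψ r y) + (φ r x - φ r y) * ψ r y| := by ring_nf
      _ ≤ |φ r x| * |ψ r x - ψ r y| + |φ r x - φ r y| * |ψ r y| := by
        rw [← abs_mul, ← abs_mul]; exact abs_add_le _ _
      _ ≤ B * (L' * dist x y) + L * dist x y * B' := by
        gcongr
        · exact (h r x hx).1
        · exact (h' r y hy).1
      _ = _ := by ring

lemma of_contDiff {E : Type*} [NormedAddCommGroup E] [NormedSpace ℝ E] {S : Set E} {φ : E → ℝ}
    (hφ : ContDiff ℝ 1 φ) (hS : Convex ℝ S) (hS' : IsCompact S) : BddLip S (fun _ => φ) := by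
  obtain ⟨L, hL⟩ := hφ.contDiffOn.exists_lipschitzOnWith one_ne_zero hS hS'
  obtain ⟨B, hB⟩ := hS'.exists_bound_of_continuousOn hφ.continuous.continuousOn
  refine ⟨|B|, L, abs_nonneg _, L.2, fun _ x hx => ⟨(hB x hx).trans (le_abs_self B),
    fun y hy => ?_⟩⟩
  exact hL.dist_le_mul x hx y hy

lemma comp_lipschitz {E : Type*} [PseudoMetricSpace E] {S : Set E} {H : ℝ → ℝ → ℝ → ℝ} {K : ℝ}
    (hK : 0 ≤ K) (hH : ∀ r u v u' v', |H r u v - H r u' v'| ≤ K * (|u - u'| + |v - v'|))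
    (hH0 : ∀ r, H r 0 0 = 0) {φ ψ : ℝ → E → ℝ} (hφ : BddLip S φ) (hψ : BddLip S ψ) :
    BddLip S (fun r x => H r (φ r x) (ψ r x)) := by
  obtain ⟨B, L, hB, hL, h⟩ := hφ
  obtain ⟨B', L', hB', hL', h'⟩ := hψ
  refine ⟨K * (B + B'), K * (L + L'), by positivity, by positivity,
    fun r x hx => ⟨?_, fun y hy => ?_⟩⟩
  · have h1 := hH r (φ r x) (ψ r x) 0 0
    rw [hH0, sub_zero, sub_zero, sub_zero] at h1
    exact h1.trans (mul_le_mul_of_nonneg_left (add_le_add (h r x hx).1 (h' r x hx).1) hK)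
  · refine (hH r _ _ _ _).trans ?_
    have h1 := (h r x hx).2 y hy
    have h2 := (h' r x hx).2 y hy
    calc _ ≤ K * (L * dist x y + L' * dist x y) := by gcongr
      _ = _ := by ring

end BddLip

/-- Global existence, in polar coordinates, for `u'' = H(r, u, u')` with `H` Lipschitz and
`H(r, 0, 0) = 0`, with continuous dependence on the initial amplitude. -/
lemma exists_polar_flow {H : ℝ → ℝ → ℝ → ℝ} {K : ℝ} (hK : 0 ≤ K)
    (hH : ∀ r u v u' v', |H r u v - H r u' v'| ≤ K * (|u - u'| + |v - v'|))
    (hH0 : ∀ r, H r 0 0 = 0) (hHc : ∀ u v, Continuous fun r => H r u v) {a b : ℝ} (hab : a < b)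
    {W : ℝ} (hW : 0 ≤ W) :
    ∃ w θ : ℝ → ℝ → ℝ, ContinuousOn (fun y => θ y b) (Icc (-W) W) ∧
      ∀ y ∈ Icc (-W) W, w y a = y ∧ θ y a = 0 ∧ ∀ x ∈ Icc a b, ∃ h,
        exp (w y x) * h = H x (exp (w y x) * sin (θ y x)) (exp (w y x) * cos (θ y x)) ∧
        HasDerivAt (w y) (sin (θ y x) * cos (θ y x) + cos (θ y x) * h) x ∧
        HasDerivAt (θ y) (cos (θ y x) ^ 2 - sin (θ y x) * h) x := by
  set h : ℝ → ℝ × ℝ → ℝ := fun r z =>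
    exp (-z.1) * H r (exp z.1 * sin z.2) (exp z.1 * cos z.2) with hh
  set X : ℝ → ℝ × ℝ → ℝ × ℝ := fun r z =>
    (sin z.2 * cos z.2 + cos z.2 * h r z, cos z.2 ^ 2 + (-sin z.2) * h r z) with hX
  have hbound : ∀ r z, |h r z| ≤ 2 * K := by
    intro r z
    have h1 := hH r (exp z.1 * sin z.2) (exp z.1 * cos z.2) 0 0
    rw [hH0, sub_zero, sub_zero, sub_zero, abs_mul, abs_mul, abs_exp] at h1
    have h2 := abs_sin_le_one z.2
    have h3 := abs_cos_le_one z.2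
    have h4 : K * (exp z.1 * |sin z.2| + exp z.1 * |cos z.2|) ≤
        K * (exp z.1 * 1 + exp z.1 * 1) := by
      gcongr
    rw [hh]
    simp only
    rw [abs_mul, abs_exp, exp_neg, inv_mul_le_iff₀ (exp_pos _)]
    linarith
  have hXbound : ∀ r z, ‖X r z‖ ≤ 1 + 2 * K := by
    intro r z
    have h1 := hbound r z
    have h2 := abs_sin_le_one z.2
    have h3 := abs_cos_le_one z.2
    have h4 : ∀ q : ℝ, |q| ≤ 1 → |q * h r z| ≤ 2 * K := fun q hq => by
      rw [abs_mul]; nlinarith [abs_nonneg q, abs_nonneg (h r z)]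
    refine norm_prod_le_iff.2 ⟨(abs_add_le _ _).trans (add_le_add ?_ (h4 _ h3)),
      (abs_add_le _ _).trans (add_le_add ?_ (h4 _ (by rwa [abs_neg])))⟩
    · rw [abs_mul]; nlinarith [abs_nonneg (sin z.2), abs_nonneg (cos z.2)]
    · rw [abs_pow]; nlinarith [abs_nonneg (cos z.2)]
  have hXcont : ∀ z, Continuous fun r => X r z := by
    intro z
    have : Continuous fun r => h r z := continuous_const.mul (hHc _ _)
    fun_prop
  set ρ : ℝ := W + (1 + 2 * K) * (b + 1 - a) with hρ
  have hρ0 : 0 ≤ ρ := by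
    have : 0 ≤ b + 1 - a := by linarith
    positivity
  set S : Set (ℝ × ℝ) := Metric.closedBall 0 ρ with hS
  have hSc : Convex ℝ S := convex_closedBall _ _
  have hSk : IsCompact S := isCompact_closedBall _ _
  have hE : BddLip S (fun _ z => exp z.1) := .of_contDiff (by fun_prop) hSc hSk
  have hE' : BddLip S (fun _ z => exp (-z.1)) := .of_contDiff (by fun_prop) hSc hSk
  have hs : BddLip S (fun _ z => sin z.2) := .of_contDiff (by fun_prop) hSc hSk
  have hs' : BddLip S (fun _ z => -sin z.2) := .of_contDiff (by fun_prop) hSc hSk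
  have hc : BddLip S (fun _ z => cos z.2) := .of_contDiff (by fun_prop) hSc hSk
  have hc2 : BddLip S (fun _ z => cos z.2 ^ 2) := .of_contDiff (by fun_prop) hSc hSk
  have hhL : BddLip S h := hE'.mul (.comp_lipschitz hK hH hH0 (hE.mul hs) (hE.mul hc))
  obtain ⟨_, L₁, -, hL₁, h₁⟩ := (hs.mul hc).add (hc.mul hhL)
  obtain ⟨_, L₂, -, hL₂, h₂⟩ := hc2.add (hs'.mul hhL)
  have hPL : IsPicardLindelof X (tmin := a - 1) (tmax := b + 1)
      ⟨a, by constructor <;> linarith⟩ (0 : ℝ × ℝ) ⟨ρ, hρ0⟩ ⟨W, hW⟩ ⟨1 + 2 * K, by positivity⟩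
      ⟨max L₁ L₂, le_max_of_le_left hL₁⟩ := by
    refine ⟨fun r _ => LipschitzOnWith.of_dist_le_mul fun x hx y hy => ?_,
      fun x _ => (hXcont x).continuousOn, fun r _ x _ => hXbound r x, ?_⟩
    · rw [Prod.dist_eq]
      refine max_le (((h₁ r x hx).2 y hy).trans ?_) (((h₂ r x hx).2 y hy).trans ?_)
      · exact mul_le_mul_of_nonneg_right (le_max_left _ _) dist_nonneg
      · exact mul_le_mul_of_nonneg_right (le_max_right _ _) dist_nonneg
    · have : max (b + 1 - a) (a - (a - 1)) = b + 1 - a := max_eq_left (by linarith)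
      change (1 + 2 * K) * max (b + 1 - a) (a - (a - 1)) ≤ ρ - W
      rw [this, hρ, add_sub_cancel_left]
  obtain ⟨α, hα, hαc⟩ := hPL.exists_forall_mem_closedBall_eq_hasDerivWithinAt_continuousOn
  have hmem : ∀ y ∈ Icc (-W) W, ((y, 0) : ℝ × ℝ) ∈
      Metric.closedBall (0 : ℝ × ℝ) (⟨W, hW⟩ : NNReal) := by
    intro y hy
    rw [mem_closedBall_zero_iff]
    exact norm_prod_le_iff.2 ⟨abs_le.2 hy, by simpa using hW⟩
  refine ⟨fun y x => (α ((y, 0), x)).1, fun y x => (α ((y, 0), x)).2, ?_, fun y hy => ?_⟩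
  · refine continuous_snd.comp_continuousOn (hαc.comp (f := fun y : ℝ => (((y, 0) : ℝ × ℝ), b))
      (by fun_prop) fun y hy => ⟨hmem y hy, ?_⟩)
    constructor <;> linarith
  · obtain ⟨h0, hd⟩ := hα _ (hmem y hy)
    simp only at h0
    refine ⟨congrArg Prod.fst h0, congrArg Prod.snd h0, fun x hx => ⟨h x (α ((y, 0), x)), ?_, ?_⟩⟩
    · rw [hh]
      simp only
      rw [← mul_assoc, ← exp_add, add_neg_cancel, exp_zero, one_mul]
    · have hda : HasDerivAt (fun x => α ((y, 0), x)) (X x (α ((y, 0), x))) x :=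
        (hd x ⟨by linarith [hx.1], by linarith [hx.2]⟩).hasDerivAt
          (Icc_mem_nhds (by linarith [hx.1]) (by linarith [hx.2]))
      refine ⟨hda.fst, ?_⟩
      rw [sub_eq_add_neg, ← neg_mul]
      exact hda.snd

/-- The power nonlinearity `|x| ^ (p - 1) x`, continued linearly for `|x| ≥ R`. -/
noncomputable def truncPow (p R x : ℝ) : ℝ := min |x| R ^ (p - 1) * x

lemma truncPow_neg (p R x : ℝ) : truncPow p R (-x) = -truncPow p R x := by simp [truncPow]

lemma truncPow_of_abs_le {p R x : ℝ} (h : |x| ≤ R) : truncPow p R x = |x| ^ (p - 1) * x := by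
  rw [truncPow, min_eq_left h]

lemma isSubpower_truncPow {p R : ℝ} (hp : 1 < p) (hR : 0 ≤ R) : IsSubpower p (truncPow p R) := by
  intro x hx
  have h0 : 0 ≤ min |x| R := le_min (abs_nonneg x) hR
  refine ⟨mul_nonneg (rpow_nonneg h0 _) hx, ?_⟩
  have h1 : min |x| R ^ (p - 1) ≤ x ^ (p - 1) :=
    rpow_le_rpow h0 ((min_le_left _ _).trans (abs_of_nonneg hx).le) (by linarith)
  rcases hx.eq_or_lt with rfl | hpos
  · simp [truncPow, zero_rpow (by linarith : p ≠ 0)]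
  · calc _ ≤ x ^ (p - 1) * x := mul_le_mul_of_nonneg_right h1 hx
      _ = x ^ p := by rw [rpow_sub_one hpos.ne']; field_simp

lemma mul_le_truncPow {p R m x : ℝ} (hp : 1 < p) (hm : 0 ≤ m) (hmR : m ≤ R) (hx : m ≤ x) :
    m ^ (p - 1) * x ≤ truncPow p R x :=
  mul_le_mul_of_nonneg_right
    (rpow_le_rpow hm (le_min (hx.trans (le_abs_self x)) hmR) (by linarith)) (hm.trans hx)

lemma abs_truncPow_sub_le {p R : ℝ} (hp : 1 < p) (hR : 0 < R) (x y : ℝ) :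
    |truncPow p R x - truncPow p R y| ≤ (1 + p) * R ^ (p - 1) * |x - y| := by
  wlog hxy : |y| ≤ |x| generalizing x y
  · rw [abs_sub_comm, abs_sub_comm x y]
    exact this y x (le_of_not_ge hxy)
  set X := min |x| R with hX
  set Y := min |y| R with hY
  have hY0 : 0 ≤ Y := le_min (abs_nonneg y) hR.le
  have hYX : Y ≤ X := min_le_min_right R hxy
  have hXR : X ≤ R := min_le_right _ _
  have hX0 : 0 ≤ X := hY0.trans hYX
  have hp1 : 0 ≤ p - 1 := by linarith
  have hpow : X ^ (p - 1) ≤ R ^ (p - 1) := rpow_le_rpow hX0 hXR hp1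
  have hpow0 : 0 ≤ X ^ (p - 1) := rpow_nonneg hX0 _
  have hmono : Y ^ (p - 1) ≤ X ^ (p - 1) := rpow_le_rpow hY0 hYX hp1
  have hdiff : |x| - |y| ≤ |x - y| := abs_sub_abs_le_abs_sub x y
  have hkey : (X ^ (p - 1) - Y ^ (p - 1)) * |y| ≤ p * R ^ (p - 1) * (|x| - |y|) := by
    have hrhs : 0 ≤ p * R ^ (p - 1) * (|x| - |y|) :=
      mul_nonneg (by positivity) (by linarith)
    rcases le_total R |y| with h | h
    · rw [hX, hY, min_eq_right h, min_eq_right (h.trans hxy), sub_self, zero_mul]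
      exact hrhs
    · have hYy : Y = |y| := min_eq_left h
      rcases hX0.eq_or_lt with h0 | h0
      · have : |y| = 0 := by linarith [abs_nonneg y]
        exact (mul_eq_zero_of_right _ this).trans_le hrhs
      rcases hY0.eq_or_lt with hy0 | hy0
      · have : |y| = 0 := by linarith
        exact (mul_eq_zero_of_right _ this).trans_le hrhs
      have hb := one_add_mul_self_le_rpow_one_add (s := Y / X - 1) (p := p)
        (by have := div_nonneg hY0 hX0; linarith) hp.le
      rw [add_sub_cancel, div_rpow hY0 hX0, le_div_iff₀ (rpow_pos_of_pos h0 p)] at hb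
      have eX : X ^ p = X ^ (p - 1) * X := by rw [rpow_sub_one h0.ne']; field_simp
      have eY : Y ^ p = Y ^ (p - 1) * Y := by rw [rpow_sub_one hy0.ne']; field_simp
      have hb' : X ^ (p - 1) * X - Y ^ (p - 1) * Y ≤ p * X ^ (p - 1) * (X - Y) := by
        have : (1 + p * (Y / X - 1)) * X ^ p = X ^ (p - 1) * X - p * X ^ (p - 1) * (X - Y) := by
          rw [eX]; field_simp; ring
        rw [← eY]
        linarith
      have hXx : X ≤ |x| := min_le_left _ _
      rw [← hYy]
      calc (X ^ (p - 1) - Y ^ (p - 1)) * Y ≤ X ^ (p - 1) * X - Y ^ (p - 1) * Y := by nlinarith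
        _ ≤ p * X ^ (p - 1) * (X - Y) := hb'
        _ ≤ p * R ^ (p - 1) * (|x| - Y) := by
          have : 0 ≤ X - Y := by linarith
          gcongr
  calc |truncPow p R x - truncPow p R y|
      = |X ^ (p - 1) * (x - y) + (X ^ (p - 1) - Y ^ (p - 1)) * y| := by
        simp only [truncPow, ← hX, ← hY]; ring_nf
    _ ≤ X ^ (p - 1) * |x - y| + (X ^ (p - 1) - Y ^ (p - 1)) * |y| := by
        refine (abs_add_le _ _).trans_eq ?_
        rw [abs_mul, abs_mul, abs_of_nonneg hpow0, abs_of_nonneg (sub_nonneg.2 hmono)]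
    _ ≤ R ^ (p - 1) * |x - y| + p * R ^ (p - 1) * |x - y| := by
        refine add_le_add (mul_le_mul_of_nonneg_right hpow (abs_nonneg _)) (hkey.trans ?_)
        exact mul_le_mul_of_nonneg_left hdiff (by positivity)
    _ = _ := by ring

lemma exists_slope_eq {φ : ℝ → ℝ} {κ κ' : ℝ} (hκ : κ ≤ κ')
    (h : ∀ x s, 0 ≤ s → κ * s ≤ φ (x + s) - φ x ∧ φ (x + s) - φ x ≤ κ' * s) (x y : ℝ) :
    ∃ A, κ ≤ A ∧ A ≤ κ' ∧ φ x - φ y = A * (x - y) := by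
  wlog hxy : y ≤ x generalizing x y
  · obtain ⟨A, h1, h2, h3⟩ := this y x (le_of_not_ge hxy)
    exact ⟨A, h1, h2, by linarith⟩
  rcases hxy.eq_or_lt with rfl | hlt
  · exact ⟨κ, le_rfl, hκ, by ring⟩
  have hpos : 0 < x - y := by linarith
  have := h y (x - y) hpos.le
  rw [add_sub_cancel] at this
  refine ⟨(φ x - φ y) / (x - y), (le_div_iff₀ hpos).2 this.1, (div_le_iff₀ hpos).2 this.2, ?_⟩
  field_simp

namespace UnifElliptic

variable {n : ℕ} {lam Lam : ℝ} {F : ℝ → ℝ → ℝ → ℝ}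

lemma exists_coeffs (hF : UnifElliptic n lam Lam F) (hn : 1 ≤ n) (hlL : lam ≤ Lam) {r : ℝ}
    (hr : 0 < r) (m l m' l' : ℝ) :
    ∃ A B, lam ≤ A ∧ A ≤ Lam ∧ lam * (n - 1) ≤ B ∧ B ≤ Lam * (n - 1) ∧
      F r m l - F r m' l' = A * (m - m') + B * (l - l') := by
  have hn' : (0 : ℝ) ≤ n - 1 := by
    have : (1 : ℝ) ≤ n := by exact_mod_cast hn
    linarith
  obtain ⟨A, hA, hA', eA⟩ := exists_slope_eq (φ := fun m => F r m l) hlL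
    (fun x s hs => by simpa using hF r hr x l s 0 hs le_rfl) m m'
  obtain ⟨B, hB, hB', eB⟩ := exists_slope_eq (φ := fun l => F r m' l)
    (mul_le_mul_of_nonneg_right hlL hn')
    (fun x s hs => by simpa [mul_assoc] using hF r hr m' x 0 s le_rfl hs) l l'
  exact ⟨A, B, hA, hA', hB, hB', by linarith⟩

lemma exists_eq (hF : UnifElliptic n lam Lam F)
    (hFcont : Continuous fun x : ℝ × ℝ × ℝ => F x.1 x.2.1 x.2.2) (hlam : 0 < lam) {r : ℝ}
    (hr : 0 < r) (l c : ℝ) : ∃ m, F r m l = c := by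
  set q := |c - F r 0 l| / lam with hq
  have hq0 : 0 ≤ q := by positivity
  have hlq : lam * q = |c - F r 0 l| := by rw [hq]; field_simp
  have h1 := (hF r hr 0 l q 0 hq0 le_rfl).1
  have h2 := (hF r hr (-q) l q 0 hq0 le_rfl).1
  simp only [zero_add, mul_zero, add_zero, neg_add_cancel] at h1 h2
  have hc : Continuous fun m => F r m l :=
    hFcont.comp (f := fun m : ℝ => ((r, m, l) : ℝ × ℝ × ℝ)) (by fun_prop)
  obtain ⟨m, -, hm⟩ := intermediate_value_Icc (a := -q) (b := q) (by linarith) hc.continuousOn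
    (show c ∈ Icc (F r (-q) l) (F r q l) from
      ⟨by linarith [neg_abs_le (c - F r 0 l)], by linarith [le_abs_self (c - F r 0 l)]⟩)
  exact ⟨m, hm⟩

/-- The fully nonlinear ODE `F(r, u'', u'/r) = -f(u)` on `[a, b]` in normal form
`u'' = H(r, u, u')`. -/
lemma exists_normal_form (hF : UnifElliptic n lam Lam F) (hn : 1 ≤ n)
    (hFcont : Continuous fun x : ℝ × ℝ × ℝ => F x.1 x.2.1 x.2.2) (hlam : 0 < lam)
    (hlL : lam ≤ Lam) (hF0 : ∀ r, F r 0 0 = 0) {a b : ℝ} (ha : 0 < a)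
    {f : ℝ → ℝ} {Kf : ℝ} (hf0 : f 0 = 0) (hf : ∀ x y, |f x - f y| ≤ Kf * |x - y|) :
    ∃ (H : ℝ → ℝ → ℝ → ℝ) (K : ℝ), 0 ≤ K ∧
      (∀ r u v u' v', |H r u v - H r u' v'| ≤ K * (|u - u'| + |v - v'|)) ∧
      (∀ r, H r 0 0 = 0) ∧
      (∀ (s : Set ℝ) (u v : ℝ → ℝ), ContinuousOn u s → ContinuousOn v s →
        ContinuousOn (fun r => H r (u r) (v r)) s) ∧
      (∀ r ∈ Icc a b, ∀ u v, F r (H r u v) (v / r) = -f u) ∧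
      (∀ r u v, ∃ c g, 0 ≤ c ∧ c ≤ Lam * (n - 1) / (lam * a) ∧ 1 / Lam ≤ g ∧ g ≤ 1 / lam ∧
        H r u v = -(c * v) - g * f u) := by
  have hn' : (0 : ℝ) ≤ n - 1 := by
    have : (1 : ℝ) ≤ n := by exact_mod_cast hn
    linarith
  have hLam : 0 < Lam := hlam.trans_le hlL
  set ρ : ℝ → ℝ := fun r => max a (min r b) with hρ
  have hρa : ∀ r, a ≤ ρ r := fun r => le_max_left _ _
  have hρ0 : ∀ r, 0 < ρ r := fun r => ha.trans_le (hρa r)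
  have hρc : Continuous ρ := by fun_prop
  choose H hH using fun r u v => hF.exists_eq hFcont hlam (hρ0 r) (v / ρ r) (-f u)
  have hdiff : ∀ r m m' l, lam * |m - m'| ≤ |F (ρ r) m l - F (ρ r) m' l| := by
    intro r m m' l
    obtain ⟨A, B, hA, -, -, -, e⟩ := hF.exists_coeffs hn hlL (hρ0 r) m l m' l
    rw [e, sub_self, mul_zero, add_zero, abs_mul, abs_of_pos (hlam.trans_le hA)]
    exact mul_le_mul_of_nonneg_right hA (abs_nonneg _)
  have hKf : 0 ≤ Kf := by
    have := hf 1 0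
    simp only [sub_zero, abs_one, mul_one] at this
    exact (abs_nonneg _).trans this
  have hfc : Continuous f := LipschitzWith.continuous (K := ⟨Kf, hKf⟩)
    (LipschitzWith.of_dist_le_mul hf)
  refine ⟨H, (Kf + Lam * (n - 1) / a) / lam, by positivity, ?_, ?_, ?_, ?_, ?_⟩
  · intro r u v u' v'
    obtain ⟨A, B, hA, -, hB, hB', e⟩ := hF.exists_coeffs hn hlL (hρ0 r) (H r u v) (v / ρ r)
      (H r u' v') (v' / ρ r)
    rw [hH, hH] at e
    have hB0 : 0 ≤ B := (mul_nonneg hlam.le hn').trans hB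
    have h1 : |B * (v / ρ r - v' / ρ r)| ≤ Lam * (n - 1) / a * |v - v'| := by
      rw [← sub_div, abs_mul, abs_div, abs_of_nonneg hB0, abs_of_pos (hρ0 r), mul_div_assoc',
        div_mul_eq_mul_div]
      have := hρa r
      gcongr
    have h2 : lam * |H r u v - H r u' v'| ≤ |A * (H r u v - H r u' v')| := by
      rw [abs_mul, abs_of_pos (hlam.trans_le hA)]
      exact mul_le_mul_of_nonneg_right hA (abs_nonneg _)
    have h3 : |A * (H r u v - H r u' v')| ≤ |f u - f u'| + |B * (v / ρ r - v' / ρ r)| := by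
      rw [show A * (H r u v - H r u' v') = -(f u - f u') - B * (v / ρ r - v' / ρ r) by linarith]
      refine (abs_sub _ _).trans ?_
      rw [abs_neg]
    have h4 := hf u u'
    rw [div_mul_eq_mul_div, le_div_iff₀ hlam]
    have h5 : 0 ≤ Lam * (n - 1) / a := by positivity
    nlinarith [mul_nonneg hKf (abs_nonneg (v - v')), mul_nonneg h5 (abs_nonneg (u - u'))]
  · intro r
    have h1 := hdiff r (H r 0 0) 0 (0 / ρ r)
    rw [hH, zero_div, hF0, hf0] at h1
    simp only [neg_zero, sub_zero, abs_zero] at h1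
    have : |H r 0 0| ≤ 0 := by nlinarith [abs_nonneg (H r 0 0)]
    exact abs_nonpos_iff.1 this
  · intro s u v hu hv r₀ hr₀
    have hψ : ContinuousOn (fun r => |-f (u r) - F (ρ r) (H r₀ (u r₀) (v r₀)) (v r / ρ r)| / lam)
        s := by
      have h1 : ContinuousOn (fun r => ((ρ r, H r₀ (u r₀) (v r₀), v r / ρ r) : ℝ × ℝ × ℝ)) s :=
        hρc.continuousOn.prodMk (continuousOn_const.prodMk
          (hv.div hρc.continuousOn fun r _ => (hρ0 r).ne'))
      exact (((hfc.comp_continuousOn hu).neg.sub (hFcont.comp_continuousOn h1)).abs).div_const _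
    have hlim := hψ r₀ hr₀
    rw [ContinuousWithinAt, hH, sub_self, abs_zero, zero_div] at hlim
    rw [ContinuousWithinAt, tendsto_iff_dist_tendsto_zero]
    refine squeeze_zero (fun _ => dist_nonneg) (fun r => ?_) hlim
    rw [le_div_iff₀ hlam, ← hH r (u r) (v r), mul_comm]
    exact hdiff r _ _ _
  · intro r hr u v
    have : ρ r = r := by rw [hρ]; simp [hr.1, hr.2]
    have h := hH r u v
    rwa [this] at h
  · intro r u v
    obtain ⟨A, B, hA, hA', hB, hB', e⟩ := hF.exists_coeffs hn hlL (hρ0 r) (H r u v) (v / ρ r) 0 0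
    rw [hH, hF0, sub_zero, sub_zero, sub_zero] at e
    have hA0 : 0 < A := hlam.trans_le hA
    have hB0 : 0 ≤ B := (mul_nonneg hlam.le hn').trans hB
    have := hρ0 r
    refine ⟨B / (A * ρ r), 1 / A, by positivity, ?_, one_div_le_one_div_of_le hA0 hA',
      one_div_le_one_div_of_le hlam hA, ?_⟩
    · have := hρa r
      gcongr
    · have : H r u v = (-f u - B * (v / ρ r)) / A := by
        rw [eq_div_iff hA0.ne']; linarith
      rw [this]
      field_simp
      ring

end UnifElliptic

lemma IsPolarSol.exists_nodes {C g₁ g₂ a b : ℝ} {f w θ : ℝ → ℝ}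
    (h : IsPolarSol C g₁ g₂ f w θ a b) (hab : a ≤ b) {k : ℕ} (hθa : θ a = 0)
    (hθb : θ b = k * π) :
    ∃ rr : ℕ → ℝ, rr 0 = a ∧ rr k = b ∧ (∀ j < k, rr j < rr (j + 1)) ∧
      (∀ j ≤ k, rr j ∈ Icc a b ∧ θ (rr j) = j * π) ∧
      ∀ j < k, ∀ x ∈ Ioo (rr j) (rr (j + 1)), θ x ∈ Ioo (j * π) ((j + 1) * π) := by
  have hex : ∀ j, ∃ x, j ≤ k → x ∈ Icc a b ∧ θ x = j * π := fun j => by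
    by_cases hj : j ≤ k
    · have : (j : ℝ) * π ≤ k * π := by gcongr
      obtain ⟨x, hx⟩ := h.exists_angle_eq le_rfl le_rfl hab (hθa.trans_le (by positivity))
        (this.trans_eq hθb.symm)
      exact ⟨x, fun _ => hx⟩
    · exact ⟨0, fun hj' => absurd hj' hj⟩
  choose rr hrr using hex
  have hle : ∀ (j : ℕ) {s t : ℝ}, s ∈ Icc a b → t ∈ Icc a b → j * π ≤ θ s → θ t ≤ j * π →
      t ≤ s := fun j s t hs ht h1 h2 => by
    by_contra! hlt
    exact (h.lt_angle j hs.1 ht.2 hlt h1).not_ge h2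
  have ha : a ∈ Icc a b := left_mem_Icc.2 hab
  have hb : b ∈ Icc a b := right_mem_Icc.2 hab
  refine ⟨rr, ?_, ?_, fun j hj => ?_, hrr, fun j hj x hx => ?_⟩
  · obtain ⟨hm, e⟩ := hrr 0 (Nat.zero_le _)
    exact le_antisymm (hle 0 ha hm (by simp [hθa]) e.le) hm.1
  · obtain ⟨hm, e⟩ := hrr k le_rfl
    exact le_antisymm hm.2 (hle k hm hb e.ge hθb.le)
  · obtain ⟨hm, e⟩ := hrr j hj.le
    obtain ⟨hm', e'⟩ := hrr (j + 1) hj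
    by_contra! hle'
    have := hle (j + 1) hm' hm e'.ge (e.trans_le (by push_cast; linarith [pi_pos]))
    have heq := le_antisymm hle' this
    rw [heq, e] at e'
    push_cast at e'
    linarith [pi_pos]
  · obtain ⟨hm, e⟩ := hrr j hj.le
    obtain ⟨hm', e'⟩ := hrr (j + 1) hj
    have hxb : x ≤ b := hx.2.le.trans hm'.2
    have hax : a ≤ x := hm.1.trans hx.1.le
    refine ⟨h.lt_angle j hm.1 hxb hx.1 e.ge, ?_⟩
    by_contra! hge
    have := h.lt_angle (j + 1) hax hm'.2 hx.2 (by push_cast; exact hge)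
    rw [e'] at this
    exact lt_irrefl _ this

/-- Radial solutions with exactly `k` nodal regions, positive in the innermost one. -/
lemma exists_radial_solution {n : ℕ} (hn : 1 ≤ n) {lam Lam p : ℝ} (hlam : 0 < lam)
    (hlL : lam ≤ Lam) (hp : 1 < p) {F : ℝ → ℝ → ℝ → ℝ}
    (hFcont : Continuous fun x : ℝ × ℝ × ℝ => F x.1 x.2.1 x.2.2) (hF0 : ∀ r : ℝ, F r 0 0 = 0)
    (hFell : UnifElliptic n lam Lam F) {a b : ℝ} (ha : 0 < a) (hab : a < b) {k : ℕ}
    (hk : 1 ≤ k) :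
    ∃ (u u' u'' : ℝ → ℝ) (rr : ℕ → ℝ),
      rr 0 = a ∧ rr k = b ∧ (∀ j < k, rr j < rr (j + 1)) ∧
      (∀ r ∈ Icc a b, HasDerivAt u (u' r) r) ∧
      (∀ r ∈ Icc a b, HasDerivAt u' (u'' r) r) ∧
      ContinuousOn u'' (Icc a b) ∧
      u a = 0 ∧ u b = 0 ∧
      (∀ r ∈ Ioo a b, -F r (u'' r) (u' r / r) = |u r| ^ (p - 1) * u r) ∧
      (∀ j ≤ k, u (rr j) = 0) ∧
      (∀ j < k, ∀ x ∈ Ioo (rr j) (rr (j + 1)), 0 < (-1 : ℝ) ^ j * u x) := by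
  have hLam : 0 < Lam := hlam.trans_le hlL
  have hn' : (0 : ℝ) ≤ n - 1 := by
    have : (1 : ℝ) ≤ n := by exact_mod_cast hn
    linarith
  have hk' : (1 : ℝ) ≤ k := by exact_mod_cast hk
  have hba : 0 < b - a := by linarith
  have hp0 : 0 ≤ p := by linarith
  have hp1 : p - 1 ≠ 0 := by linarith
  set C := Lam * (n - 1) / (lam * a) with hCdef
  have hC : 0 ≤ C := by positivity
  have hg₁ : 0 < 1 / Lam := by positivity
  have hg₂ : 0 < 1 / lam := by positivity
  set η := (b - a) / (3 * k) with hηdef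
  have hη : 0 < η := by positivity
  set κ := 2 * π / η with hκdef
  have hκ : 0 < κ := by positivity
  have hκη : 2 * π ≤ κ * η := by rw [hκdef, div_mul_cancel₀ _ hη.ne']
  set N := (C ^ 2 + κ ^ 2) / (2 * (1 / Lam)) with hNdef
  have hN0 : 0 < N := by positivity
  have hN : C ^ 2 + κ ^ 2 ≤ 2 * (1 / Lam * N) := by
    rw [hNdef]; exact le_of_eq (by field_simp)
  set m := N ^ (p - 1)⁻¹ with hmdef
  have hm : 0 < m := rpow_pos_of_pos hN0 _
  have hmN : m ^ (p - 1) = N := rpow_inv_rpow hN0.le hp1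
  have hkη : a + k * (3 * η) = b := by rw [hηdef]; field_simp; ring
  obtain ⟨A, hA⟩ := IsPolarSol.exists_fast_rotation (p := p) hC hg₁.le hp0 hκ hN0.le hN hm hη hκη
    k hkη.le 0
  obtain ⟨α₀, hα₀, hslow⟩ := IsPolarSol.exists_slow_start hC hg₁.le hg₂ hp hab
  set α₁ := max A α₀ with hα₁def
  have hα₁ : 0 < α₁ := hα₀.trans_le (le_max_right _ _)
  obtain ⟨D, hD⟩ := IsPolarSol.exists_amplitude_bound (C := C) hg₁.le hg₂.le hp0 hab α₁ k
  set R := max m D with hRdef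
  have hR : 0 < R := hm.trans_le (le_max_left _ _)
  have hsub := isSubpower_truncPow hp hR.le
  have hodd := truncPow_neg p R
  have hsteep : ∀ x, m ≤ x → N * x ≤ truncPow p R x := fun x hx =>
    hmN ▸ mul_le_truncPow hp hm.le (le_max_left _ _) hx
  obtain ⟨H, K, hK, hH, hH0, hHc, hHF, hHn⟩ := hFell.exists_normal_form hn hFcont hlam hlL hF0 ha
    (b := b) (f := truncPow p R) (by simp [truncPow]) (abs_truncPow_sub_le hp hR)
  set W := max |log α₀| |log α₁| with hWdef
  obtain ⟨w, θ, hθc, hflow⟩ := exists_polar_flow hK hH hH0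
    (fun u v => continuousOn_univ.1 (hHc univ _ _ continuousOn_const continuousOn_const)) hab
    (W := W) ((abs_nonneg _).trans (le_max_left _ _))
  have hpol : ∀ y ∈ Icc (-W) W,
      IsPolarSol C (1 / Lam) (1 / lam) (truncPow p R) (w y) (θ y) a b := fun y hy x hx => by
    obtain ⟨h, e, h1, h2⟩ := (hflow y hy).2.2 x hx
    obtain ⟨c, g, hc, hcC, hg, hg', e'⟩ := hHn x (exp (w y x) * sin (θ y x))
      (exp (w y x) * cos (θ y x))
    exact ⟨c, g, h, hc, hcC, hg, hg', e.trans e', h1, h2⟩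
  have hlog : log α₀ ≤ log α₁ := log_le_log hα₀ (le_max_right _ _)
  have hsubset : Icc (log α₀) (log α₁) ⊆ Icc (-W) W :=
    Icc_subset_Icc ((neg_le_neg (le_max_left _ _)).trans (neg_abs_le _))
      ((le_abs_self _).trans (le_max_right _ _))
  have hlow : θ (log α₀) b ≤ k * π := by
    have hy := hsubset (left_mem_Icc.2 hlog)
    refine (hslow _ _ _ hsub hodd (hpol _ hy) (hflow _ hy).2.1 ?_).trans ?_
    · rw [(hflow _ hy).1, exp_log hα₀]
    · nlinarith [pi_pos]
  have hhigh : k * π ≤ θ (log α₁) b := by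
    have hy := hsubset (right_mem_Icc.2 hlog)
    obtain ⟨t, ht, hθt, -⟩ := hA _ _ _ hsub hodd hsteep (hpol _ hy) (hflow _ hy).2.1
      (by rw [(hflow _ hy).1, exp_log hα₁]; exact le_max_left _ _)
    rw [hkη] at ht
    rcases ht.2.eq_or_lt with rfl | hlt
    · exact hθt.ge
    · exact ((hpol _ hy).lt_angle k ht.1 le_rfl hlt hθt.ge).le
  obtain ⟨y, hy, hθb⟩ := intermediate_value_Icc hlog (hθc.mono hsubset) ⟨hlow, hhigh⟩
  have hyW := hsubset hy
  obtain ⟨hwa, hθa, hode⟩ := hflow y hyW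
  have hsol := hpol y hyW
  have hθle : ∀ x ∈ Icc a b, θ y x ≤ k * π := fun x hx => by
    by_contra! hgt
    rcases hx.2.eq_or_lt with rfl | hlt
    · exact hgt.ne' hθb
    · exact (hsol.lt_angle k hx.1 le_rfl hlt hgt.le).ne' hθb
  have hexpR : ∀ x ∈ Icc a b, exp (w y x) ≤ R := fun x hx => by
    refine (hD _ _ _ hsub hodd hsol hθa ?_ x hx (hθle x hx)).trans (le_max_right _ _)
    rw [hwa, ← exp_log hα₁]
    exact exp_le_exp.2 hy.2
  obtain ⟨rr, hr0, hrk, hrlt, hrθ, hrsign⟩ := hsol.exists_nodes hab.le hθa hθb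
  set u : ℝ → ℝ := fun x => exp (w y x) * sin (θ y x) with hu
  set v : ℝ → ℝ := fun x => exp (w y x) * cos (θ y x) with hv
  have hderiv : ∀ x ∈ Icc a b, HasDerivAt u (v x) x ∧ HasDerivAt v (H x (u x) (v x)) x :=
    fun x hx => by
    obtain ⟨h, e, h1, h2⟩ := hode x hx
    have := hasDerivAt_exp_mul_sin_sub 0 h1 h2
    simpa [e] using this
  have hzero : ∀ j ≤ k, u (rr j) = 0 := fun j hj => by
    simp only [hu, (hrθ j hj).2, sin_nat_mul_pi, mul_zero]
  refine ⟨u, v, fun x => H x (u x) (v x), rr, hr0, hrk, hrlt, fun x hx => (hderiv x hx).1,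
    fun x hx => (hderiv x hx).2, hHc _ _ _
      (fun x hx => (hderiv x hx).1.continuousAt.continuousWithinAt)
      (fun x hx => (hderiv x hx).2.continuousAt.continuousWithinAt),
    hr0 ▸ hzero 0 (Nat.zero_le _), hrk ▸ hzero k le_rfl, fun x hx => ?_, hzero,
    fun j hj x hx => ?_⟩
  · have hx' := Ioo_subset_Icc_self hx
    rw [hHF x hx', neg_neg, truncPow_of_abs_le]
    refine le_trans ?_ (hexpR x hx')
    rw [hu, abs_mul, abs_exp]
    exact mul_le_of_le_one_right (exp_pos _).le (abs_sin_le_one _)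
  · obtain ⟨h1, h2⟩ := hrsign j hj x hx
    rw [hu, mul_left_comm, ← sin_sub_nat_mul_pi]
    exact mul_pos (exp_pos _) (sin_pos_of_pos_of_lt_pi (by linarith) (by linarith))

lemma UnifElliptic.neg_comp_neg {n : ℕ} {lam Lam : ℝ} {F : ℝ → ℝ → ℝ → ℝ}
    (hF : UnifElliptic n lam Lam F) : UnifElliptic n lam Lam fun r m l => -F r (-m) (-l) := by
  intro r hr m l s t hs ht
  have h := hF r hr (-(m + s)) (-(l + t)) s t hs ht
  rw [show -(m + s) + s = -m by ring, show -(l + t) + t = -l by ring] at h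
  exact ⟨by linarith [h.1], by linarith [h.2]⟩

/-- Theorem 2 (paper): for every `k ≥ 1` there exist radial solutions of
`−F(x,D²u) = |u|^{p−1}u` in the annulus `A_{a,b}` with exactly `k` nodal regions,
with both possible sign patterns. -/
theorem sign_changing_radial_solutions_in_annulus
    (n : ℕ) (hn : 2 ≤ n) (lam Lam p : ℝ) (hlam : 0 < lam) (hlL : lam ≤ Lam) (hp : 1 < p)
    (F : ℝ → ℝ → ℝ → ℝ)
    (hFcont : Continuous fun x : ℝ × ℝ × ℝ => F x.1 x.2.1 x.2.2)
    (hF0 : ∀ r : ℝ, F r 0 0 = 0)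
    (hFell : UnifElliptic n lam Lam F)
    (a b : ℝ) (ha : 0 < a) (hab : a < b) (k : ℕ) (hk : 1 ≤ k) :
    (∃ (u u' u'' : ℝ → ℝ) (rr : ℕ → ℝ),
      rr 0 = a ∧ rr k = b ∧ (∀ j < k, rr j < rr (j + 1)) ∧
      (∀ r ∈ Icc a b, HasDerivAt u (u' r) r) ∧
      (∀ r ∈ Icc a b, HasDerivAt u' (u'' r) r) ∧
      ContinuousOn u'' (Icc a b) ∧
      u a = 0 ∧ u b = 0 ∧
      (∀ r ∈ Ioo a b, -F r (u'' r) (u' r / r) = |u r| ^ (p - 1) * u r) ∧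
      (∀ j ≤ k, u (rr j) = 0) ∧
      (∀ j < k, ∀ x ∈ Ioo (rr j) (rr (j + 1)), 0 < (-1 : ℝ) ^ j * u x)) ∧
    (∃ (u u' u'' : ℝ → ℝ) (rr : ℕ → ℝ),
      rr 0 = a ∧ rr k = b ∧ (∀ j < k, rr j < rr (j + 1)) ∧
      (∀ r ∈ Icc a b, HasDerivAt u (u' r) r) ∧
      (∀ r ∈ Icc a b, HasDerivAt u' (u'' r) r) ∧
      ContinuousOn u'' (Icc a b) ∧
      u a = 0 ∧ u b = 0 ∧
      (∀ r ∈ Ioo a b, -F r (u'' r) (u' r / r) = |u r| ^ (p - 1) * u r) ∧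
      (∀ j ≤ k, u (rr j) = 0) ∧
      (∀ j < k, ∀ x ∈ Ioo (rr j) (rr (j + 1)), 0 < (-1 : ℝ) ^ (j + 1) * u x)) := by
  refine ⟨exists_radial_solution (by omega) hlam hlL hp hFcont hF0 hFell ha hab hk, ?_⟩
  obtain ⟨u, u', u'', rr, h0, h1, h2, h3, h4, h5, h6, h7, h8, h9, h10⟩ :=
    exists_radial_solution (by omega : 1 ≤ n) hlam hlL hp
      (F := fun r m l => -F r (-m) (-l))
      (hFcont.comp (f := fun x : ℝ × ℝ × ℝ => (x.1, -x.2.1, -x.2.2)) (by fun_prop)).neg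
      (by simp [hF0]) hFell.neg_comp_neg ha hab hk
  refine ⟨-u, -u', -u'', rr, h0, h1, h2, fun r hr => (h3 r hr).neg, fun r hr => (h4 r hr).neg,
    h5.neg, by simp [h6], by simp [h7], fun r hr => ?_, fun j hj => by simp [h9 j hj],
    fun j hj x hx => ?_⟩
  · have := h8 r hr
    simp only [Pi.neg_apply, abs_neg, neg_div, mul_neg]
    linarith
  · have := h10 j hj x hx
    simp only [Pi.neg_apply, pow_succ]
    linarith
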